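/- (Proposition 2.1) Let φ be an Euler system for S, let m ≥ 1 be coprime to every prime in S, and let η ∈ μ_m with η ≠ 1. Let p be a rational prime with p ∤ m and p ∉ S, and let ζ be a primitive p-th root of unity. Then φ(ζη) ∈ H_{mp}, φ(η) ∈ H_m, and N_{H_{mp}/H_m}(φ(ζη)) = φ(η^p)/φ(η) = φ(η)^{Frob_p − 1}, where Frob_p is the Frobenius element at p in Gal(H_m/ℚ) (so that φ(η)^{Frob_p} = φ(η^p)). -/

import Mathlib

open scoped BigOperators

noncomputable section

abbrev Qbar : Type := AlgebraicClosure ℚ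

/-- `W_S`: the roots of unity in `ℚ̄` whose order is coprime to every prime in `S`. -/
def WS (S : Finset ℕ) : Set Qbar :=
  {ζ : Qbar | ∃ n : ℕ, 0 < n ∧ (∀ q ∈ S, Nat.Coprime n q) ∧ ζ ^ n = 1}

/-- Congruence of two algebraic numbers modulo a prime ideal `𝔭` of the ring of all
algebraic integers: `x ≡ y mod 𝔭` in the usual (localized) sense.  This encodes
congruence modulo the prime `𝔭 ∩ 𝒪_K` of any number field `K` containing `x` and `y`. -/
def congMod (𝔭 : Ideal (integralClosure ℤ Qbar)) (x y : Qbar) : Prop :=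
  ∃ c : integralClosure ℤ Qbar, c ∉ 𝔭 ∧ ∃ u : integralClosure ℤ Qbar, u ∈ 𝔭 ∧
    (x - y) * (c : Qbar) = (u : Qbar)

/-- An Euler system for a finite set `S` of rational primes containing `2`:
a map `φ : W_S → ℚ̄ˣ` satisfying the axioms (E1), (E2), (E3). -/
structure IsEulerSystem (S : Finset ℕ) (φ : Qbar → Qbar) : Prop where
  two_mem : 2 ∈ S
  prime_mem : ∀ q ∈ S, Nat.Prime q
  ne_zero : ∀ η ∈ WS S, φ η ≠ 0
  /-- (E1a): Galois equivariance. -/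
  galois_equivariant : ∀ σ : Qbar ≃ₐ[ℚ] Qbar, ∀ η ∈ WS S, φ (σ η) = σ (φ η)
  /-- (E1b): `φ(η⁻¹) = φ(η)`. -/
  map_inv : ∀ η ∈ WS S, φ η⁻¹ = φ η
  /-- (E2): the norm relation `∏_{ζ ∈ μ_p} φ(ζη) = φ(η^p)` for primes `p ∉ S`. -/
  norm_relation : ∀ p : ℕ, p.Prime → p ∉ S → ∀ η ∈ WS S,
    (∏ᶠ (ζ : Qbar) (_ : ζ ^ p = 1), φ (ζ * η)) = φ (η ^ p)
  /-- (E3): the congruence `φ(ζη) ≡ φ(η) mod 𝔭` for all primes `𝔭` above `p ∉ S`,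
  whenever `η` has order prime to `p` and `ζ ∈ μ_p`. -/
  congruence : ∀ p : ℕ, p.Prime → p ∉ S → ∀ η ∈ WS S,
    (∃ n : ℕ, 0 < n ∧ ¬ p ∣ n ∧ η ^ n = 1) →
    ∀ ζ : Qbar, ζ ^ p = 1 →
    ∀ 𝔭 : Ideal (integralClosure ℤ Qbar), 𝔭.IsMaximal → (p : integralClosure ℤ Qbar) ∈ 𝔭 →
      congMod 𝔭 (φ (ζ * η)) (φ η)

/-- `H_m = ℚ(μ_m)⁺`, the maximal real subfield of the `m`-th cyclotomic field, realized
inside `ℚ̄` as the field generated by the elements `ζ + ζ⁻¹` for `ζ ∈ μ_m`. -/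
def Hplus (m : ℕ) : IntermediateField ℚ Qbar :=
  IntermediateField.adjoin ℚ {x : Qbar | ∃ ζ : Qbar, ζ ^ m = 1 ∧ x = ζ + ζ⁻¹}


instance Qbar_isAlgClosure : IsAlgClosure ℚ Qbar := by
  have h := AlgebraicClosure.instIsAlgClosure ℚ
  have e : (DivisionRing.toRatAlgebra : Algebra ℚ Qbar) = AlgebraicClosure.instAlgebra ℚ :=
    Subsingleton.elim _ _
  rw [e]
  exact h

instance Qbar_isAlgebraic : Algebra.IsAlgebraic ℚ Qbar := IsAlgClosure.isAlgebraic

instance Qbar_normal : Normal ℚ Qbar := IsAlgClosure.normal ℚ Qbar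

instance Qbar_galois : IsGalois ℚ Qbar := {}

lemma fix_or_inv {K : Type*} [Field K] {a b : K} (ha : a ≠ 0) (hb : b ≠ 0) (h : a + a⁻¹ = b + b⁻¹) : a = b ∨ a = b⁻¹ := by
  have : (a - b) * (a - b⁻¹) = 0 := by
    have h2 : a * a + 1 = a * (b + b⁻¹) := by rw [← h]; field_simp
    have : b * b⁻¹ = 1 := mul_inv_cancel₀ hb
    linear_combination h2 + this
  rcases mul_eq_zero.mp this with h | h
  · left; exact sub_eq_zero.mp h
  · right; exact sub_eq_zero.mp h

lemma root_ne_zero {x : Qbar} {n : ℕ} (hn : n ≠ 0) (h : x ^ n = 1) : x ≠ 0 := by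
  rintro rfl
  simp [hn] at h

lemma add_inv_mem {n : ℕ} {x : Qbar} (h : x ^ n = 1) : x + x⁻¹ ∈ Hplus n :=
  IntermediateField.subset_adjoin _ _ ⟨x, h, rfl⟩

lemma phi_mem (S : Finset ℕ) (φ : Qbar → Qbar) (hφ : IsEulerSystem S φ) {n : ℕ} (hn : n ≠ 0)
    (hS : ∀ q ∈ S, Nat.Coprime n q) {x : Qbar} (hx : x ^ n = 1) : φ x ∈ Hplus n := by
  have hW : x ∈ WS S := ⟨n, Nat.pos_of_ne_zero hn, hS, hx⟩
  rw [← InfiniteGalois.fixedField_fixingSubgroup (Hplus n), IntermediateField.mem_fixedField_iff]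
  intro σ hσ
  have h1 : σ (x + x⁻¹) = x + x⁻¹ :=
    (IntermediateField.mem_fixingSubgroup_iff _ _).mp hσ _ (add_inv_mem hx)
  rw [map_add, map_inv₀] at h1
  have hx0 := root_ne_zero hn hx
  rw [← hφ.galois_equivariant σ x hW]
  rcases fix_or_inv (by simpa using hx0) hx0 h1 with h | h
  · rw [h]
  · rw [h, hφ.map_inv x hW]

lemma Hplus_le {m n : ℕ} (h : m ∣ n) : Hplus m ≤ Hplus n := by
  apply IntermediateField.adjoin.mono
  rintro x ⟨ζ, hζ, rfl⟩
  obtain ⟨k, rfl⟩ := h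
  exact ⟨ζ, by rw [pow_mul, hζ, one_pow], rfl⟩

lemma agree {n : ℕ} (hn : n ≠ 0) {θ : Qbar} (hθ : IsPrimitiveRoot θ n) (σ τ : Qbar →ₐ[ℚ] Qbar)
    (h : σ θ = τ θ ∨ σ θ = (τ θ)⁻¹) {x : Qbar} (hx : x ∈ Hplus n) : σ x = τ x := by
  unfold Hplus at hx
  induction hx using IntermediateField.adjoin_induction with
  | mem x hx =>
    obtain ⟨z, hz, rfl⟩ := hx
    have : NeZero n := ⟨hn⟩
    obtain ⟨k, -, rfl⟩ := hθ.eq_pow_of_pow_eq_one hz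
    simp only [map_add, map_inv₀, map_pow]
    rcases h with h | h
    · rw [h]
    · rw [h, inv_pow, inv_inv, add_comm]
  | algebraMap x => simp
  | add x y _ _ h1 h2 => simp [h1, h2]
  | inv x _ h1 => simp [h1]
  | mul x y _ _ h1 h2 => simp [h1, h2]

instance Hplus_fd (n : ℕ) [NeZero n] : FiniteDimensional ℚ (Hplus n) := by
  classical
  have : Finite {x : Qbar | ∃ ζ : Qbar, ζ ^ n = 1 ∧ x = ζ + ζ⁻¹} := by
    apply Set.Finite.subset (Set.Finite.image (fun z : Qbar => z + z⁻¹)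
      (Polynomial.nthRoots n (1 : Qbar)).toFinset.finite_toSet)
    rintro x ⟨z, hz, rfl⟩
    refine ⟨z, ?_, rfl⟩
    rw [Finset.mem_coe, Multiset.mem_toFinset, Polynomial.mem_nthRoots (NeZero.pos n)]
    exact hz
  exact IntermediateField.finiteDimensional_adjoin (fun x _ => Algebra.IsIntegral.isIntegral x)

lemma prim_mul {m p : ℕ} (hc : m.Coprime p) {ω ξ : Qbar}
    (hω : IsPrimitiveRoot ω m) (hξ : IsPrimitiveRoot ξ p) : IsPrimitiveRoot (ω * ξ) (m * p) := by
  rw [hω.eq_orderOf, hξ.eq_orderOf] at hc ⊢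
  rw [← (Commute.all ω ξ).orderOf_mul_eq_mul_orderOf_of_coprime hc]
  exact IsPrimitiveRoot.orderOf _

lemma exists_tau {m p : ℕ} (hm : m ≠ 0) (hp : p ≠ 0) (hc : m.Coprime p) {ω ζ ξ : Qbar}
    (hω : IsPrimitiveRoot ω m) (hζ : IsPrimitiveRoot ζ p) (hξ : IsPrimitiveRoot ξ p) :
    ∃ τ : Qbar ≃ₐ[ℚ] Qbar, τ ω = ω ∧ τ ζ = ξ := by
  have hpos : 0 < m * p := by positivity
  obtain ⟨τ, hτ⟩ := minpoly.exists_algEquiv_of_root' (K := ℚ) (y := ω * ζ) (x := ω * ξ)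
    (Algebra.IsAlgebraic.isAlgebraic _) (by
      rw [← Polynomial.cyclotomic_eq_minpoly_rat (prim_mul hc hω hζ) hpos,
        Polynomial.cyclotomic_eq_minpoly_rat (prim_mul hc hω hξ) hpos]
      exact minpoly.aeval _ _)
  have key : τ ω = ω := by
    have h1 : τ ((ω * ζ) ^ p) = (ω * ξ) ^ p := by rw [map_pow, hτ]
    rw [mul_pow, mul_pow, hζ.pow_eq_one, hξ.pow_eq_one, mul_one] at h1
    have : NeZero m := ⟨hm⟩
    obtain ⟨k, -, hk⟩ := (hω.pow_of_coprime p hc.symm).eq_pow_of_pow_eq_one hω.pow_eq_one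
    rw [← hk, map_pow, h1]
  refine ⟨τ, key, ?_⟩
  rw [map_mul, key] at hτ
  exact mul_left_cancel₀ (hω.ne_zero hm) hτ

lemma norm_generic {E : Type*} [Field E] [Algebra ℚ E] [IsAlgClosed E] [Normal ℚ E]
    (K M : IntermediateField ℚ E) (hle : K ≤ M) [FiniteDimensional ℚ M]
    (x : E) (hx : x ∈ M) (s : Finset E) (τ : E → E →ₐ[ℚ] E)
    (hfix : ∀ ξ ∈ s, ∀ y ∈ K, τ ξ y = y)
    (hinj : ∀ ξ ∈ s, ∀ ξ' ∈ s, (∀ y ∈ M, τ ξ y = τ ξ' y) → ξ = ξ')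
    (hsurj : ∀ t : E →ₐ[ℚ] E, (∀ y ∈ K, t y = y) → ∃ ξ ∈ s, ∀ y ∈ M, t y = τ ξ y) :
    ((Algebra.norm ↥K
        (⟨x, (IntermediateField.mem_extendScalars hle).mpr hx⟩ :
          ↥(IntermediateField.extendScalars hle)) : ↥K) : E) = ∏ ξ ∈ s, τ ξ x := by
  classical
  have : FiniteDimensional ℚ (IntermediateField.extendScalars hle) :=
    inferInstanceAs (FiniteDimensional ℚ M)
  have : FiniteDimensional K (IntermediateField.extendScalars hle) :=
    FiniteDimensional.right ℚ K _
  have hnorm := Algebra.norm_eq_prod_embeddings K E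
    (⟨x, (IntermediateField.mem_extendScalars hle).mpr hx⟩ :
      IntermediateField.extendScalars hle)
  refine Eq.trans hnorm (Eq.symm ?_)
  refine Finset.prod_bij (fun ξ hξ =>
    { toRingHom := (τ ξ : E →+* E).comp (algebraMap (IntermediateField.extendScalars hle) E)
      commutes' := fun r => hfix ξ hξ r r.2 }) (fun _ _ => Finset.mem_univ _) ?_ ?_ ?_
  · intro ξ hξ ξ' hξ' heq
    refine hinj ξ hξ ξ' hξ' fun y hy => ?_
    exact DFunLike.congr_fun heq
      (⟨y, (IntermediateField.mem_extendScalars hle).mpr hy⟩ :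
        IntermediateField.extendScalars hle)
  · intro σ _
    have hnor : Normal K E := Normal.tower_top_of_normal ℚ K E
    obtain ⟨ξ, hξ, h⟩ := hsurj ((σ.liftNormal E).restrictScalars ℚ)
      (fun y hy => (σ.liftNormal E).commutes (⟨y, hy⟩ : K))
    refine ⟨ξ, hξ, ?_⟩
    ext y
    refine Eq.trans (h y ((IntermediateField.mem_extendScalars hle).mp y.2)).symm ?_
    exact σ.liftNormal_commutes E y
  · intro ξ hξ
    rfl

open IntermediateField in
/-- Proposition 2.1. For an Euler system `φ` for `S`, `η ∈ μ_m` with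
`η ≠ 1` (`m` coprime to `S`), a prime `p ∤ m`, `p ∉ S`, and `ζ` a primitive `p`-th root
of unity: `φ(ζη) ∈ H_{mp}`, `φ(η) ∈ H_m`, and
`N_{H_{mp}/H_m}(φ(ζη)) = φ(η^p)/φ(η) ( = φ(η)^{Frob_p - 1})`. -/
theorem norm_euler_system_value
    (S : Finset ℕ) (φ : Qbar → Qbar) (hφ : IsEulerSystem S φ)
    (m : ℕ) (hm : 1 ≤ m) (hmS : ∀ q ∈ S, Nat.Coprime m q)
    (η : Qbar) (hη : η ^ m = 1) (hη1 : η ≠ 1)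
    (p : ℕ) (hp : p.Prime) (hpm : ¬ p ∣ m) (hpS : p ∉ S)
    (ζ : Qbar) (hζ : IsPrimitiveRoot ζ p) :
    ∃ (h1 : φ (ζ * η) ∈ Hplus (m * p)) (_h2 : φ η ∈ Hplus m)
      (hle : Hplus m ≤ Hplus (m * p)),
      ((Algebra.norm ↥(Hplus m)
          (⟨φ (ζ * η), (IntermediateField.mem_extendScalars hle).mpr h1⟩ :
            ↥(IntermediateField.extendScalars hle)) : ↥(Hplus m)) : Qbar)
        = φ (η ^ p) / φ η := by
  classical
  have hm0 : m ≠ 0 := by omega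
  have hp0 : p ≠ 0 := hp.ne_zero
  have hmp0 : m * p ≠ 0 := mul_ne_zero hm0 hp0
  have hc : m.Coprime p := ((Nat.Prime.coprime_iff_not_dvd hp).mpr hpm).symm
  have hSmp : ∀ q ∈ S, Nat.Coprime (m * p) q := by
    intro q hq
    refine Nat.Coprime.mul_left (hmS q hq) ?_
    refine (Nat.coprime_primes hp (hφ.prime_mem q hq)).mpr ?_
    rintro rfl
    exact hpS hq
  have hle : Hplus m ≤ Hplus (m * p) := Hplus_le (dvd_mul_right m p)
  have hx : ∀ ξ : Qbar, ξ ^ p = 1 → (ξ * η) ^ (m * p) = 1 := by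
    intro ξ hξ
    rw [mul_pow, mul_comm m p, pow_mul, hξ, one_pow, mul_comm p m, pow_mul, hη, one_pow, one_mul]
  have h1 : φ (ζ * η) ∈ Hplus (m * p) := phi_mem S φ hφ hmp0 hSmp (hx ζ hζ.pow_eq_one)
  have hηW : η ∈ WS S := ⟨m, hm, hmS, hη⟩
  refine ⟨h1, phi_mem S φ hφ hm0 hmS hη, hle, ?_⟩
  have : NeZero m := ⟨hm0⟩
  have : NeZero p := ⟨hp0⟩
  have : NeZero (m * p) := ⟨hmp0⟩
  obtain ⟨ω, hω⟩ := HasEnoughRootsOfUnity.exists_primitiveRoot Qbar m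
  obtain ⟨k, -, hk⟩ := hω.eq_pow_of_pow_eq_one hη
  have hωζ : IsPrimitiveRoot (ω * ζ) (m * p) := prim_mul hc hω hζ
  have hm2 : m.Coprime 2 := hmS 2 hφ.two_mem
  have hm1 : m ≠ 1 := by
    rintro rfl
    exact hη1 (by simpa using hη)
  have hτ : ∀ ξ : Qbar, ∃ τ : Qbar ≃ₐ[ℚ] Qbar, IsPrimitiveRoot ξ p → (τ ω = ω ∧ τ ζ = ξ) := by
    intro ξ
    by_cases hξ : IsPrimitiveRoot ξ p
    · obtain ⟨τ, h⟩ := exists_tau hm0 hp0 hc hω hζ hξ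
      exact ⟨τ, fun _ => h⟩
    · exact ⟨AlgEquiv.refl, fun h => absurd h hξ⟩
  choose τ hτ using hτ
  rw [norm_generic (Hplus m) (Hplus (m * p)) hle _ h1 (primitiveRoots p Qbar)
    (fun ξ => (τ ξ : Qbar →ₐ[ℚ] Qbar))]
  rotate_left
  · intro ξ hξ y hy
    exact agree hm0 hω (τ ξ : Qbar →ₐ[ℚ] Qbar) (AlgHom.id ℚ Qbar)
        (Or.inl (hτ ξ (isPrimitiveRoot_of_mem_primitiveRoots hξ)).1) hy
  · intro ξ hξ ξ' hξ' heq
    have hξ := isPrimitiveRoot_of_mem_primitiveRoots hξ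
    have hξ' := isPrimitiveRoot_of_mem_primitiveRoots hξ'
    have h2 : τ ξ (ω * ζ + (ω * ζ)⁻¹) = τ ξ' (ω * ζ + (ω * ζ)⁻¹) :=
      heq _ (add_inv_mem hωζ.pow_eq_one)
    simp only [map_add, map_inv₀, map_mul, (hτ ξ hξ).1, (hτ ξ hξ).2, (hτ ξ' hξ').1,
        (hτ ξ' hξ').2] at h2
    · skip
      have n0 := (prim_mul hc hω hξ).ne_zero hmp0
      have n0' := (prim_mul hc hω hξ').ne_zero hmp0
      rcases fix_or_inv n0 n0' h2 with h | h
      · exact mul_left_cancel₀ (hω.ne_zero hm0) h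
      · exfalso
        have h3 : ω ^ 2 * (ξ * ξ') = 1 := by
          have := mul_inv_cancel₀ n0'
          rw [← h] at this
          linear_combination this
        have h4 : ω ^ (2 * p) = 1 := by
          have h5 : (ω ^ 2 * (ξ * ξ')) ^ p = 1 := by rw [h3, one_pow]
          rwa [mul_pow, mul_pow, hξ.pow_eq_one, hξ'.pow_eq_one, one_mul, mul_one,
            ← pow_mul] at h5
        have h6 := hω.dvd_of_pow_eq_one _ h4
        exact hm1 (Nat.Coprime.eq_one_of_dvd (Nat.Coprime.mul_right hm2 hc) h6)
  · intro t' hK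
    · have hfix : t' (ω + ω⁻¹) = ω + ω⁻¹ := hK _ (add_inv_mem hω.pow_eq_one)
      have hω0 := hω.ne_zero hm0
      rw [map_add, map_inv₀] at hfix
      have htζ : IsPrimitiveRoot (t' ζ) p := hζ.map_of_injective t'.injective
      have main : ∀ ξ, IsPrimitiveRoot ξ p →
          (t' (ω * ζ) = τ ξ (ω * ζ) ∨ t' (ω * ζ) = (τ ξ (ω * ζ))⁻¹) →
          ∀ y ∈ Hplus (m * p), t' y = τ ξ y := by
        intro ξ hξ h y hy
        exact agree hmp0 hωζ t' (τ ξ : Qbar →ₐ[ℚ] Qbar) h hy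
      rcases fix_or_inv (by simpa using hω0) hω0 hfix with h | h
      · refine ⟨t' ζ, (mem_primitiveRoots hp.pos).mpr htζ, main _ htζ (Or.inl ?_)⟩
        rw [map_mul, map_mul, (hτ _ htζ).1, (hτ _ htζ).2, h]
      · refine ⟨(t' ζ)⁻¹, (mem_primitiveRoots hp.pos).mpr htζ.inv, main _ htζ.inv (Or.inr ?_)⟩
        rw [map_mul, map_mul, (hτ _ htζ.inv).1, (hτ _ htζ.inv).2, h, mul_inv, inv_inv]
  have hprod : ∏ ξ ∈ primitiveRoots p Qbar, (τ ξ : Qbar →ₐ[ℚ] Qbar) (φ (ζ * η)) =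
      ∏ ξ ∈ primitiveRoots p Qbar, φ (ξ * η) := by
    refine Finset.prod_congr rfl fun ξ hξ => ?_
    have hξ := isPrimitiveRoot_of_mem_primitiveRoots hξ
    rw [AlgEquiv.coe_toAlgHom, ← hφ.galois_equivariant _ _
        ⟨m * p, Nat.pos_of_ne_zero hmp0, hSmp, hx ζ hζ.pow_eq_one⟩]
    rw [map_mul, (hτ ξ hξ).2, ← hk, map_pow, (hτ ξ hξ).1]
  have hrel := hφ.norm_relation p hp hpS η hηW
  rw [eq_div_iff (hφ.ne_zero η hηW), ← hrel, hprod]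
  have hset : ∀ z : Qbar, z ^ p = 1 ↔ z ∈ insert 1 (primitiveRoots p Qbar) := by
    intro z
    rw [Finset.mem_insert, mem_primitiveRoots hp.pos]
    constructor
    · intro hz
      by_cases h : z = 1
      · exact Or.inl h
      · right
        rw [← orderOf_eq_prime (hp := ⟨hp⟩) hz h]
        exact IsPrimitiveRoot.orderOf z
    · rintro (rfl | h)
      · simp
      · exact h.pow_eq_one
  simp only [hset]
  rw [finprod_mem_finset_eq_prod, Finset.prod_insert, one_mul, mul_comm]
  rw [mem_primitiveRoots hp.pos]
  intro h
  exact hp.ne_one (h.unique IsPrimitiveRoot.one)
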